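/- Let T > 0 and ε > 0. Suppose ρ : ℝ → ℝ is differentiable and σ : ℝ → ℝ is continuously differentiable, both are periodic with period T, ρ(t) > 0 for all t ∈ ℝ, the derivative of ρ satisfies ρ'(t) = 2σ(t)ρ(t) for all t ∈ ℝ, and σ'(t) < 0 for every t with ρ(t) ≤ ε. Then ρ(t) > ε for all t ∈ ℝ. (This is the strict-convexity argument showing that a closed geodesic of an asymptotically complex hyperbolic metric cannot enter the collar region {ρ ≤ ε} near the boundary at infinity: along the geodesic flow one has ρ̇ = 2σρ and σ̇ < 0 where ρ is small, so ρ∘γ would have an interior minimum with negative second derivative, a contradiction.) -/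

import Mathlib

/-!
Put `f = log ρ`. The equation `ρ' = 2σρ` says `f' = 2σ`, so `f'' = 2σ' < 0` wherever `f ≤ log ε`.
A periodic `f` attains its minimum; if that minimum were at most `log ε`, then `f` would have a
local minimum at a point where its second derivative is negative.
-/

theorem not_isLocalMin_of_deriv_deriv_neg {f : ℝ → ℝ} {x : ℝ}
    (hf : deriv (deriv f) x < 0) (hc : ContinuousAt f x) : ¬ IsLocalMin f x := by
  intro hmin
  have hmax : IsLocalMax f x := isLocalMax_of_deriv_deriv_neg hf hmin.deriv_eq_zero hc
  have hconst : f =ᶠ[nhds x] fun _ => f x := by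
    filter_upwards [hmin, hmax] with y hmin_y hmax_y using le_antisymm hmax_y hmin_y
  have hzero : deriv (deriv f) x = 0 := by
    simpa only [deriv_const', deriv_const] using hconst.deriv.deriv_eq
  exact hf.ne hzero

theorem exists_forall_le_of_periodic {α : Type*} [LinearOrder α] [TopologicalSpace α]
    [ClosedIicTopology α] {f : ℝ → α} {T : ℝ} (hper : Function.Periodic f T)
    (hT : T ≠ 0) (hf : Continuous f) : ∃ x, ∀ y, f x ≤ f y := by
  obtain ⟨_, ⟨x, rfl⟩, hx⟩ :=
    (hper.compact_of_continuous hT hf).exists_isLeast (Set.range_nonempty f)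
  exact ⟨x, fun y => hx ⟨y, rfl⟩⟩

theorem lt_of_periodic_of_deriv_deriv_neg {f : ℝ → ℝ} {T c : ℝ}
    (hper : Function.Periodic f T) (hT : T ≠ 0) (hf : Continuous f)
    (hneg : ∀ t, f t ≤ c → deriv (deriv f) t < 0) (t : ℝ) : c < f t := by
  obtain ⟨m, hm⟩ := exists_forall_le_of_periodic hper hT hf
  have hmin : IsLocalMin f m := .of_forall hm
  by_contra! hle
  exact not_isLocalMin_of_deriv_deriv_neg (hneg m ((hm t).trans hle)) hf.continuousAt hmin

theorem closed_geodesic_avoids_collar_general {T ε : ℝ} (hT : T ≠ 0) (hε : 0 < ε) {ρ σ : ℝ → ℝ}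
    (hρdiff : Differentiable ℝ ρ) (hρper : Function.Periodic ρ T) (hρpos : ∀ t, 0 < ρ t)
    (hode : ∀ t, deriv ρ t = 2 * σ t * ρ t) (hconv : ∀ t, ρ t ≤ ε → deriv σ t < 0) (t : ℝ) :
    ε < ρ t := by
  have hlogdiff : Differentiable ℝ (fun s => Real.log (ρ s)) :=
    hρdiff.log fun s => (hρpos s).ne'
  have hderiv : deriv (fun s => Real.log (ρ s)) = fun s => 2 * σ s := by
    ext s
    rw [deriv.log (hρdiff s) (hρpos s).ne', hode s, mul_div_cancel_right₀ _ (hρpos s).ne']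
  have hlogneg : ∀ s, Real.log (ρ s) ≤ Real.log ε →
      deriv (deriv fun r => Real.log (ρ r)) s < 0 := by
    intro s hs
    rw [hderiv, deriv_const_mul_field]
    linarith [hconv s ((Real.log_le_log_iff (hρpos s) hε).1 hs)]
  exact (Real.log_lt_log_iff hε (hρpos t)).1 <|
    lt_of_periodic_of_deriv_deriv_neg (hρper.comp Real.log) hT hlogdiff.continuous hlogneg t

/-- Strict convexity of the boundary defining function along closed geodesics near
infinity: let `T > 0` and `ε > 0`, let `ρ : ℝ → ℝ` be differentiable and `σ : ℝ → ℝ` be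
continuously differentiable, both `T`-periodic, with `ρ > 0` everywhere, satisfying the
Hamiltonian equation `ρ' = 2σρ`, and with `σ' < 0` wherever `ρ ≤ ε`.  Then `ρ > ε`
everywhere: a closed geodesic of an asymptotically complex hyperbolic metric cannot
enter the collar region `{ρ ≤ ε}` near the boundary at infinity. -/
theorem closed_geodesic_avoids_collar (T ε : ℝ) (hT : 0 < T) (hε : 0 < ε)
    (ρ σ : ℝ → ℝ)
    (hρdiff : Differentiable ℝ ρ) (hσdiff : ContDiff ℝ 1 σ)
    (hρper : Function.Periodic ρ T) (hσper : Function.Periodic σ T)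
    (hρpos : ∀ t, 0 < ρ t)
    (hode : ∀ t, deriv ρ t = 2 * σ t * ρ t)
    (hconv : ∀ t, ρ t ≤ ε → deriv σ t < 0) :
    ∀ t, ε < ρ t :=
  closed_geodesic_avoids_collar_general hT.ne' hε hρdiff hρper hρpos hode hconv
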